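/- For every n ≥ 1 there exist constants C₁, C₂ > 0 depending only on n such that for all t > 0 and all weakly decreasing x, y ∈ ℝⁿ one has C₁·E ≤ e^{−(|x|²+|y|²)/(4t)}·(∑_{σ∈Sₙ} sgn(σ)·exp((1/(2t))·∑_{k=1}^n x_{σ(k)} y_k))·∏_{1≤i<j≤n}(t+(x_i−x_j)(y_i−y_j)) ≤ C₂·E, where E = e^{−|x−y|²/(4t)}·∏_{1≤i<j≤n}(x_i−x_j)(y_i−y_j). (Equivalently, the W-invariant heat kernel of the flat complex symmetric space of type A_{n−1}, given by p_t^W(x,y) = c·t^{−n/2−γ}·e^{−(|x|²+|y|²)/(4t)}·ψ_x(y/(2t)) with γ = n(n−1)/2, satisfies p_t^W(x,y) ≍ t^{−n/2}·e^{−|x−y|²/(4t)}/∏_{i<j}(t+(x_i−x_j)(y_i−y_j)).) -/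

import Mathlib

open Finset

/-!
With `x / (2t)` in place of `x`, the claim is that the alternating exponential sum `A(x, y)` is
comparable with `exp ⟨x, y⟩ * ∏_{i<j} p_ij / (1 + p_ij)`, where `p_ij = (x_i - x_j)(y_i - y_j)`.
This goes by induction on the dimension. A common shift of the `y_j` makes the last one vanish, and
then subtracting consecutive rows of the determinant gives the Gelfand–Tsetlin form of the
Harish-Chandra–Itzykson–Zuber integral:
`A(x, (w, 0)) = ∏ w_j * ∫ A(z, w) dz` over the box of all `z` interlacing `x`.

The weight `exp ⟨z, w⟩` confines `z_j` to within `r_j ≈ min (x_j - x_{j+1}, 1 / w_j)` of the corner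
`x_j`, where the gaps `z_i - z_j` are of size `x_i - x_j + r_j`, so the integral is the integrand
with these gaps times `∏ r_j`. Trading the widened gaps for the true ones telescopes along each
row, because a product of two numbers is the product of their minimum and maximum.
-/

open MeasureTheory

section FinProducts

variable {M : Type*} [CommMonoid M] {n : ℕ}

lemma prod_Ioi_fin_last (f : Fin (n + 1) → M) : ∏ j ∈ Ioi (Fin.last n), f j = 1 := by
  rw [← Fin.top_eq_last, Ioi_top, prod_empty]

lemma prod_Ioi_fin_castSucc (f : Fin (n + 1) → M) (i : Fin n) :
    ∏ j ∈ Ioi i.castSucc, f j = (∏ j ∈ Ioi i, f j.castSucc) * f (Fin.last n) := by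
  simp [← filter_lt_eq_Ioi, prod_filter, Fin.prod_univ_castSucc]

lemma prod_prod_Ioi_fin_castSucc (f : Fin (n + 1) → Fin (n + 1) → M) :
    ∏ i, ∏ j ∈ Ioi i, f i j =
      (∏ i : Fin n, ∏ j ∈ Ioi i, f i.castSucc j.castSucc) *
        ∏ i : Fin n, f i.castSucc (Fin.last n) := by
  simp only [Fin.prod_univ_castSucc, prod_Ioi_fin_castSucc, prod_Ioi_fin_last, prod_mul_distrib,
    mul_one]

lemma prod_prod_Ioi_fin_snd (f : Fin n → M) :
    ∏ i, ∏ j ∈ Ioi i, f j = ∏ j : Fin n, f j ^ (j : ℕ) := by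
  rw [prod_comm' (t' := univ) (s' := Iio) (by simp)]
  simp

end FinProducts

section Comparability

/-- `a` and `b` agree up to the factor `C`; a quantitative form of the relation `a ≍ b` between
nonnegative quantities, with one constant for both directions. -/
structure ComparableWith {R : Type*} [Mul R] [LE R] (C a b : R) : Prop where
  le_mul : a ≤ C * b
  ge_mul : b ≤ C * a

namespace ComparableWith

lemma refl {R : Type*} [MulOneClass R] [Preorder R] (a : R) : ComparableWith 1 a a :=
  ⟨(one_mul a).ge, (one_mul a).ge⟩

lemma symm {R : Type*} [Mul R] [LE R] {C a b : R} (h : ComparableWith C a b) :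
    ComparableWith C b a :=
  ⟨h.ge_mul, h.le_mul⟩

lemma max_of_le {R : Type*} [CommSemiring R] [LinearOrder R] [IsStrictOrderedRing R]
    {C D a b : R} (hD : 0 < D) (hb : 0 ≤ b) (hab : a ≤ C * b) (hba : b ≤ D * a) :
    ComparableWith (max C D) a b where
  le_mul := hab.trans (mul_le_mul_of_nonneg_right (le_max_left C D) hb)
  ge_mul := by
    have ha : 0 ≤ a := nonneg_of_mul_nonneg_right (hb.trans hba) hD
    exact hba.trans (mul_le_mul_of_nonneg_right (le_max_right C D) ha)

variable {R : Type*} [CommSemiring R] [PartialOrder R] [IsOrderedRing R] {C D a b c d : R}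

lemma trans (hC : 0 ≤ C) (hD : 0 ≤ D) (hab : ComparableWith C a b) (hbc : ComparableWith D b c) :
    ComparableWith (C * D) a c where
  le_mul := by
    rw [mul_assoc]
    exact hab.le_mul.trans (mul_le_mul_of_nonneg_left hbc.le_mul hC)
  ge_mul := by
    rw [mul_comm C, mul_assoc]
    exact hbc.ge_mul.trans (mul_le_mul_of_nonneg_left hab.ge_mul hD)

lemma self_add (ha : 0 ≤ a) (hab : a ≤ b) : ComparableWith 2 b (b + a) where
  le_mul := by
    have hb : 0 ≤ b := ha.trans hab
    rw [two_mul]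
    exact (le_add_of_nonneg_right ha).trans (le_add_of_nonneg_right (add_nonneg hb ha))
  ge_mul := by
    rw [two_mul]
    gcongr

lemma mul (ha : 0 ≤ a) (hb : 0 ≤ b) (hc : 0 ≤ c) (hd : 0 ≤ d)
    (hab : ComparableWith C a b) (hcd : ComparableWith D c d) :
    ComparableWith (C * D) (a * c) (b * d) where
  le_mul :=
    (mul_le_mul hab.le_mul hcd.le_mul hc (ha.trans hab.le_mul)).trans_eq (mul_mul_mul_comm ..)
  ge_mul :=
    (mul_le_mul hab.ge_mul hcd.ge_mul hd (hb.trans hab.ge_mul)).trans_eq (mul_mul_mul_comm ..)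

lemma mul_left (hc : 0 ≤ c) (h : ComparableWith C a b) : ComparableWith C (c * a) (c * b) where
  le_mul := (mul_le_mul_of_nonneg_left h.le_mul hc).trans_eq (mul_left_comm ..)
  ge_mul := (mul_le_mul_of_nonneg_left h.ge_mul hc).trans_eq (mul_left_comm ..)

lemma mul_right (hc : 0 ≤ c) (h : ComparableWith C a b) : ComparableWith C (a * c) (b * c) := by
  simpa only [mul_comm _ c] using h.mul_left hc

lemma prod {ι : Type*} {s : Finset ι} {C f g : ι → R} (hf : ∀ i ∈ s, 0 ≤ f i)
    (hg : ∀ i ∈ s, 0 ≤ g i) (h : ∀ i ∈ s, ComparableWith (C i) (f i) (g i)) :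
    ComparableWith (∏ i ∈ s, C i) (∏ i ∈ s, f i) (∏ i ∈ s, g i) where
  le_mul := (prod_le_prod hf fun i hi => (h i hi).le_mul).trans_eq prod_mul_distrib
  ge_mul := (prod_le_prod hg fun i hi => (h i hi).ge_mul).trans_eq prod_mul_distrib

lemma prod_prod_Ioi {ι : Type*} [Fintype ι] [Preorder ι] [LocallyFiniteOrderTop ι]
    {C f g : ι → ι → R} (hf : ∀ ⦃i j⦄, i < j → 0 ≤ f i j) (hg : ∀ ⦃i j⦄, i < j → 0 ≤ g i j)
    (h : ∀ ⦃i j⦄, i < j → ComparableWith (C i j) (f i j) (g i j)) :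
    ComparableWith (∏ i, ∏ j ∈ Ioi i, C i j) (∏ i, ∏ j ∈ Ioi i, f i j)
      (∏ i, ∏ j ∈ Ioi i, g i j) :=
  .prod (fun _ _ => prod_nonneg fun _ hj => hf (mem_Ioi.1 hj))
    (fun _ _ => prod_nonneg fun _ hj => hg (mem_Ioi.1 hj))
    fun _ _ => .prod (fun _ hj => hf (mem_Ioi.1 hj)) (fun _ hj => hg (mem_Ioi.1 hj))
      fun _ hj => h (mem_Ioi.1 hj)

-- Each exchange trades the factor `u j` for `v j` and moves `f` one step along the chain.
lemma telescope {n : ℕ} {f : Fin (n + 1) → R} {u v : Fin n → R} (i : Fin n) (hC : 0 ≤ C)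
    (hu : ∀ j, i < j → 0 ≤ u j) (hv : ∀ j, i < j → 0 ≤ v j)
    (h : ∀ j, i < j → ComparableWith C (f j.castSucc * u j) (v j * f j.succ)) :
    ComparableWith (∏ _j ∈ Ioi i, C) (f i.succ * ∏ j ∈ Ioi i, u j)
      ((∏ j ∈ Ioi i, v j) * f (Fin.last n)) := by
  induction n with
  | zero => exact i.elim0
  | succ n ih =>
    induction i using Fin.lastCases with
    | last =>
      simpa only [prod_Ioi_fin_last, mul_one, one_mul, Fin.succ_last] using
        refl (f (Fin.last (n + 1)))
    | cast i =>
      have hlast := h (Fin.last n) i.castSucc_lt_last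
      have hinit : ComparableWith (∏ _j ∈ Ioi i, C)
          (f i.succ.castSucc * ∏ j ∈ Ioi i, u j.castSucc)
          ((∏ j ∈ Ioi i, v j.castSucc) * f (Fin.last n).castSucc) :=
        ih (f := f ∘ Fin.castSucc) i (fun j hj => hu j.castSucc hj) (fun j hj => hv j.castSucc hj)
          fun j hj => h j.castSucc hj
      have hv' : 0 ≤ ∏ j ∈ Ioi i, v j.castSucc :=
        prod_nonneg fun j hj => hv j.castSucc (Fin.castSucc_lt_castSucc_iff.2 (mem_Ioi.1 hj))
      have hi := hinit.mul_right (hu (Fin.last n) i.castSucc_lt_last)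
      rw [mul_assoc (∏ j ∈ Ioi i, v j.castSucc)] at hi
      have key := hi.trans (prod_nonneg fun _ _ => hC) hC (hlast.mul_left hv')
      simpa only [prod_Ioi_fin_castSucc, mul_assoc, Fin.succ_castSucc, Fin.succ_last] using key

end ComparableWith

end Comparability

section Saturation

variable {K : Type*} [Field K] [LinearOrder K] [IsStrictOrderedRing K] {a c d s t : K}

/-- The truncation of `s` at height `c⁻¹`: the harmonic sum of `s` and `c⁻¹`, comparable to
`min s c⁻¹`. For `c = 0` it is the identity. -/
def saturate (c s : K) : K := s / (1 + c * s)

lemma saturate_nonneg (hc : 0 ≤ c) (hs : 0 ≤ s) : 0 ≤ saturate c s := by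
  unfold saturate; positivity

lemma mul_saturate_nonneg (hc : 0 ≤ c) (hs : 0 ≤ s) : 0 ≤ c * saturate c s :=
  mul_nonneg hc (saturate_nonneg hc hs)

lemma saturate_mul_one_add (hc : 0 ≤ c) (hs : 0 ≤ s) : saturate c s * (1 + c * s) = s :=
  div_mul_cancel₀ _ (by positivity)

lemma saturate_le_self (hc : 0 ≤ c) (hs : 0 ≤ s) : saturate c s ≤ s :=
  div_le_self hs (le_add_of_nonneg_right (mul_nonneg hc hs))

lemma mul_saturate_le_one (hc : 0 ≤ c) (hs : 0 ≤ s) : c * saturate c s ≤ 1 := by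
  rw [saturate, ← mul_div_assoc]
  exact div_le_one_of_le₀ (by linarith) (by positivity)

lemma saturate_le_saturate (hc : 0 ≤ c) (hs : 0 ≤ s) (hst : s ≤ t) :
    saturate c s ≤ saturate c t := by
  have ht : 0 ≤ t := hs.trans hst
  unfold saturate
  rw [div_le_div_iff₀ (by positivity) (by positivity)]
  linarith

lemma saturate_add_left_le (hc : 0 ≤ c) (hd : 0 ≤ d) (hs : 0 ≤ s) :
    saturate (c + d) s ≤ saturate c s :=
  div_le_div_of_nonneg_left hs (by positivity) (by linarith [mul_nonneg hd hs])

lemma saturate_mul_le (hc : 0 ≤ c) (hs : 0 ≤ s) (ht : 1 ≤ t) :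
    saturate c (t * s) ≤ t * saturate c s := by
  have : 0 ≤ t := zero_le_one.trans ht
  rw [saturate, saturate, ← mul_div_assoc]
  have : c * s ≤ c * (t * s) := mul_le_mul_of_nonneg_left (le_mul_of_one_le_left hs ht) hc
  exact div_le_div_of_nonneg_left (by positivity) (by positivity) (by linarith)

lemma saturate_add_le (hc : 0 ≤ c) (hs : 0 ≤ s) (ht : 0 ≤ t) :
    saturate c (s + t) ≤ saturate c s + saturate c t := by
  unfold saturate
  rw [add_div]
  gcongr <;> linarith

lemma saturate_saturate (hc : 0 ≤ c) (hd : 0 ≤ d) (hs : 0 ≤ s) :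
    saturate c (saturate d s) = saturate (c + d) s := by
  unfold saturate
  field_simp
  ring

lemma ComparableWith.saturate (hc : 0 ≤ c) (ha : 1 ≤ a) (hs : 0 ≤ s) (ht : 0 ≤ t)
    (h : ComparableWith a s t) : ComparableWith a (saturate c s) (saturate c t) where
  le_mul := (saturate_le_saturate hc hs h.le_mul).trans (saturate_mul_le hc ht ha)
  ge_mul := (saturate_le_saturate hc ht h.ge_mul).trans (saturate_mul_le hc hs ha)

lemma min_saturate_le (hc : 0 ≤ c) (hd : 0 ≤ d) (ha : 0 ≤ a) (hs : 0 ≤ s) :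
    min (saturate c a) (saturate (c + d) s) ≤ 2 * saturate (c + d) a := by
  rcases le_total (d * a) (1 + c * a) with h | h
  · refine (min_le_left _ _).trans ?_
    unfold saturate
    rw [← mul_div_assoc, div_le_div_iff₀ (by positivity) (by positivity)]
    linarith [mul_le_mul_of_nonneg_left h ha]
  · refine (min_le_right _ _).trans ?_
    unfold saturate
    rw [← mul_div_assoc, div_le_div_iff₀ (by positivity) (by positivity)]
    nlinarith [mul_le_mul_of_nonneg_left h hs, mul_nonneg hc ha, mul_nonneg (mul_nonneg hc ha) hs]

-- Up to constants, `saturate (c + d) a` is the minimum of `A := saturate c a` and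
-- `B := saturate (c + d) s`, while `saturate c (a + saturate d s)` is their maximum.
lemma comparableWith_saturate_mul_saturate_of_le (hc : 0 ≤ c) (hd : 0 ≤ d) (ha : 0 ≤ a)
    (has : a ≤ s) :
    ComparableWith 2 (saturate (c + d) a * saturate c (a + saturate d s))
      (saturate c a * saturate (c + d) s) := by
  have hs : 0 ≤ s := ha.trans has
  have hds : 0 ≤ saturate d s := saturate_nonneg hd hs
  have hm : 0 ≤ saturate (c + d) a := saturate_nonneg (by positivity) ha
  have hA : 0 ≤ saturate c a := saturate_nonneg hc ha
  have hB : 0 ≤ saturate (c + d) s := saturate_nonneg (by positivity) hs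
  constructor
  · calc saturate (c + d) a * saturate c (a + saturate d s)
        ≤ saturate (c + d) a * (saturate c a + saturate (c + d) s) := by
          rw [← saturate_saturate hc hd hs]
          exact mul_le_mul_of_nonneg_left (saturate_add_le hc ha hds) hm
      _ = saturate (c + d) a * saturate c a + saturate (c + d) a * saturate (c + d) s := mul_add ..
      _ ≤ saturate (c + d) s * saturate c a + saturate c a * saturate (c + d) s := by
          gcongr
          · exact saturate_le_saturate (by positivity) ha has
          · exact saturate_add_left_le hc hd ha
      _ = 2 * (saturate c a * saturate (c + d) s) := by ring
  · have hmax : max (saturate c a) (saturate (c + d) s) ≤ saturate c (a + saturate d s) := by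
      rw [← saturate_saturate hc hd hs]
      exact max_le (saturate_le_saturate hc ha (by linarith))
        (saturate_le_saturate hc hds (by linarith))
    calc saturate c a * saturate (c + d) s
        = min (saturate c a) (saturate (c + d) s) * max (saturate c a) (saturate (c + d) s) :=
          (min_mul_max _ _).symm
      _ ≤ 2 * saturate (c + d) a * saturate c (a + saturate d s) :=
          mul_le_mul (min_saturate_le hc hd ha hs) hmax (le_max_of_le_left hA) (by positivity)
      _ = 2 * (saturate (c + d) a * saturate c (a + saturate d s)) := mul_assoc ..

lemma comparableWith_saturate_exchange (hc : 0 ≤ c) (hd : 0 ≤ d) (ha : 0 ≤ a) (hs : 0 ≤ s) :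
    ComparableWith 4 (saturate (c + d) a * saturate c (a + saturate d s))
      (saturate c a * saturate (c + d) (a + s)) := by
  have hcd : 0 ≤ c + d := add_nonneg hc hd
  have has : 0 ≤ a + s := add_nonneg ha hs
  have hds : 0 ≤ saturate d s := saturate_nonneg hd hs
  have hads : 0 ≤ a + saturate d s := add_nonneg ha hds
  rw [show (4 : K) = 2 * 2 by norm_num]
  rcases le_total s a with hsa | has'
  · have hr := (ComparableWith.self_add hds ((saturate_le_self hd hs).trans hsa)).saturate hc
      one_le_two ha hads
    have hs := (ComparableWith.self_add hs hsa).saturate hcd one_le_two ha has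
    rw [mul_comm (saturate c a)]
    exact .mul (saturate_nonneg hcd ha) (saturate_nonneg hcd has) (saturate_nonneg hc hads)
      (saturate_nonneg hc ha) hs hr.symm
  · have h := (ComparableWith.self_add ha has').saturate hcd one_le_two hs (by linarith)
    rw [add_comm s a] at h
    exact (comparableWith_saturate_mul_saturate_of_le hc hd ha has').trans zero_le_two zero_le_two
      (h.mul_left (saturate_nonneg hc ha))

end Saturation

lemma det_eq_det_sub_of_last_col_eq_one {R : Type*} [CommRing R] {n : ℕ}
    (A : Matrix (Fin (n + 1)) (Fin (n + 1)) R)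
    (hA : ∀ i, A i (Fin.last n) = 1) :
    A.det = (Matrix.of fun i j : Fin n =>
      A i.castSucc j.castSucc - A i.succ j.castSucc).det := by
  let B : Matrix (Fin (n + 1)) (Fin (n + 1)) R :=
    Matrix.of (Fin.cons (A 0) fun i j => A i.succ j - A i.castSucc j)
  have hAB : A.det = B.det :=
    Matrix.det_eq_of_forall_row_eq_smul_add_pred (fun _ => 1) (fun j => by simp [B])
      (fun i j => by simp [B])
  have hB : B.submatrix Fin.succ Fin.castSucc = -Matrix.of fun i j : Fin n =>
      A i.castSucc j.castSucc - A i.succ j.castSucc := by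
    ext i j
    simp [B]
  rw [hAB, Matrix.det_succ_column B (Fin.last n), Fin.sum_univ_succ,
    Finset.sum_eq_zero fun i _ => by simp [B, hA]]
  have h00 : B 0 (Fin.last n) = 1 := hA 0
  rw [add_zero, h00, Fin.succAbove_zero, Fin.succAbove_last, hB, Matrix.det_neg, ← mul_assoc]
  simp [← mul_pow]

lemma ComparableWith.setIntegral {α : Type*} [MeasurableSpace α] {μ : Measure α} {S : Set α}
    {C : ℝ} {f g : α → ℝ} (hS : MeasurableSet S) (hf : IntegrableOn f S μ)
    (hg : IntegrableOn g S μ) (h : ∀ z ∈ S, ComparableWith C (f z) (g z)) :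
    ComparableWith C (∫ z in S, f z ∂μ) (∫ z in S, g z ∂μ) where
  le_mul := by
    rw [← integral_const_mul]
    exact setIntegral_mono_on hf (hg.const_mul C) hS fun z hz => (h z hz).le_mul
  ge_mul := by
    rw [← integral_const_mul]
    exact setIntegral_mono_on hg (hf.const_mul C) hS fun z hz => (h z hz).ge_mul

lemma integral_det {ι 𝕜 : Type*} [Fintype ι] [DecidableEq ι] [RCLike 𝕜] {α : ι → Type*}
    [∀ i, MeasurableSpace (α i)] {μ : ∀ i, Measure (α i)} [∀ i, SigmaFinite (μ i)]
    {f : ∀ i, ι → α i → 𝕜} (hf : ∀ i j, Integrable (f i j) (μ i)) :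
    ∫ z, (Matrix.of fun i j => f i j (z i)).det ∂Measure.pi μ =
      (Matrix.of fun i j => ∫ t, f i j t ∂μ i).det := by
  simp only [← Matrix.det_transpose (Matrix.of _), Matrix.det_apply', Matrix.transpose_apply,
    Matrix.of_apply]
  rw [integral_finsetSum _ fun σ _ => (Integrable.fintype_prod_dep fun i => hf i (σ i)).const_mul _]
  refine sum_congr rfl fun σ _ => ?_
  rw [integral_const_mul, integral_fintype_prod_eq_prod fun i => f i (σ i)]

lemma volume_restrict_Icc_pi {ι : Type*} [Fintype ι] (a b : ι → ℝ) :
    volume.restrict (Set.Icc a b) =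
      Measure.pi fun i => (volume : Measure ℝ).restrict (Set.Icc (a i) (b i)) := by
  rw [volume_pi, ← Measure.restrict_pi_pi, Set.pi_univ_Icc]

lemma setIntegral_Icc_prod {ι 𝕜 : Type*} [Fintype ι] [RCLike 𝕜] (a b : ι → ℝ) (f : ι → ℝ → 𝕜) :
    ∫ z in Set.Icc a b, ∏ i, f i (z i) = ∏ i, ∫ t in Set.Icc (a i) (b i), f i t := by
  rw [volume_restrict_Icc_pi, integral_fintype_prod_eq_prod]

section ScalarCalculus

variable {a b c : ℝ}

lemma mul_setIntegral_Icc_exp_mul (hba : b ≤ a) :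
    c * ∫ t in Set.Icc b a, Real.exp (t * c) = Real.exp (a * c) - Real.exp (b * c) := by
  rw [integral_Icc_eq_integral_Ioc, ← intervalIntegral.integral_of_le hba,
    ← intervalIntegral.integral_const_mul]
  refine intervalIntegral.integral_eq_sub_of_hasDerivAt (f := fun t => Real.exp (t * c))
    (fun t _ => ?_) (Continuous.intervalIntegrable (by fun_prop) _ _)
  simpa [mul_comm] using ((hasDerivAt_id t).mul_const c).exp

lemma setIntegral_Icc_inv_one_add_mul_sq (hc : 0 ≤ c) (hba : b ≤ a) :
    ∫ t in Set.Icc b a, ((1 + c * (a - t)) ^ 2)⁻¹ = saturate c (a - b) := by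
  have hpos : ∀ t ∈ Set.uIcc b a, 1 + c * (a - t) ≠ 0 := fun t ht => by
    rw [Set.uIcc_of_le hba] at ht
    have := mul_nonneg hc (sub_nonneg.2 ht.2)
    positivity
  rw [integral_Icc_eq_integral_Ioc, ← intervalIntegral.integral_of_le hba,
    intervalIntegral.integral_eq_sub_of_hasDerivAt (f := fun t => -saturate c (a - t))]
  · simp [saturate]
  · intro t ht
    have hsub : HasDerivAt (fun t => a - t) (-1) t := by simpa using (hasDerivAt_id t).const_sub a
    refine (hsub.div ((hsub.const_mul c).const_add 1) (hpos t ht)).neg.congr_deriv ?_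
    have := hpos t ht
    field_simp
    ring
  · exact ContinuousOn.intervalIntegrable <|
      ContinuousOn.inv₀ (by fun_prop) fun t ht => pow_ne_zero _ (hpos t ht)

lemma exp_neg_mul_one_add_pow_le (k : ℕ) (ha : 0 ≤ a) :
    Real.exp (-a) * (1 + a) ^ k ≤ ((k + 2).factorial * Real.exp 1) * ((1 + a) ^ 2)⁻¹ := by
  have h := Real.pow_div_factorial_le_exp (1 + a) (by linarith) (k + 2)
  rw [div_le_iff₀ (by positivity), Real.exp_add] at h
  rw [← div_eq_mul_inv, le_div_iff₀ (by positivity), Real.exp_neg, mul_assoc, ← pow_add,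
    inv_mul_le_iff₀ (Real.exp_pos a)]
  linarith

end ScalarCalculus

section InterlacingBox

variable {α : Type*} [Preorder α] {n : ℕ} {x : Fin (n + 1) → α} {z : Fin n → α}

/-- The Gelfand–Tsetlin polytope of one row: the vectors `z` with
`x 0 ≥ z 0 ≥ x 1 ≥ z 1 ≥ ⋯ ≥ z (n - 1) ≥ x n`, which form a box. -/
def interlacingBox (x : Fin (n + 1) → α) : Set (Fin n → α) :=
  Set.Icc (fun j => x j.succ) fun j => x j.castSucc

lemma antitone_of_mem_interlacingBox (hz : z ∈ interlacingBox x) : Antitone z := by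
  cases n with
  | zero => exact Subsingleton.antitone z
  | succ n => exact Fin.antitone_iff_succ_le.2 fun i => (hz.2 i.succ).trans (hz.1 i.castSucc)

end InterlacingBox

section AltExp

variable {ι : Type*} [Fintype ι] [DecidableEq ι]

/-- The alternating exponential sum `A(x, y)`, written as the determinant of `exp (x i * y j)`. -/
noncomputable def altExp (x y : ι → ℝ) : ℝ :=
  (Matrix.of fun i j => Real.exp (x i * y j)).det

lemma altExp_eq_sum (x y : ι → ℝ) :
    altExp x y = ∑ σ : Equiv.Perm ι, ((Equiv.Perm.sign σ : ℤ) : ℝ) *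
      Real.exp (∑ k, x (σ k) * y k) := by
  simp only [altExp, Matrix.det_apply', Matrix.of_apply, Real.exp_sum]

lemma altExp_add_const (x y : ι → ℝ) (c : ℝ) :
    altExp x (fun j => y j + c) = Real.exp (c * ∑ i, x i) * altExp x y := by
  rw [mul_sum, Real.exp_sum, altExp, altExp, ← Matrix.det_mul_column]
  simp only [Matrix.of_apply, ← Real.exp_add, mul_add, add_comm, mul_comm]

lemma continuous_altExp_left (y : ι → ℝ) : Continuous fun x => altExp x y :=
  Continuous.matrix_det (by fun_prop)

lemma setIntegral_interlacingBox_altExp {n : ℕ} (x : Fin (n + 1) → ℝ) (w : Fin n → ℝ) :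
    ∫ z in interlacingBox x, altExp z w =
      (Matrix.of fun i j : Fin n =>
        ∫ t in Set.Icc (x i.succ) (x i.castSucc), Real.exp (t * w j)).det := by
  rw [interlacingBox, volume_restrict_Icc_pi]
  exact integral_det (f := fun _ j t => Real.exp (t * w j)) fun i j =>
    Continuous.integrableOn_Icc (by fun_prop)

lemma altExp_snoc_zero {n : ℕ} {x : Fin (n + 1) → ℝ} (hx : Antitone x) (w : Fin n → ℝ) :
    altExp x (Fin.snoc w 0 : Fin (n + 1) → ℝ) =
      (∏ j, w j) * ∫ z in interlacingBox x, altExp z w := by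
  rw [altExp, det_eq_det_sub_of_last_col_eq_one _ fun i => by simp,
    setIntegral_interlacingBox_altExp, ← Matrix.det_mul_row]
  simp only [Matrix.of_apply, Fin.snoc_castSucc,
    mul_setIntegral_Icc_exp_mul (hx Fin.castSucc_lt_succ.le)]

end AltExp

section SaturatedRootProd

variable {ι : Type*} [Fintype ι] [Preorder ι] [LocallyFiniteOrderTop ι] {w : ι → ℝ}
  {s t : ι → ι → ℝ}

/-- The product over the positive roots `i < j` of type `A` of the gap `w i - w j` times the
saturation of `s i j` at the height `(w i - w j)⁻¹`. -/
noncomputable def saturatedRootProd (w : ι → ℝ) (s : ι → ι → ℝ) : ℝ :=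
  ∏ i, ∏ j ∈ Ioi i, (w i - w j) * saturate (w i - w j) (s i j)

lemma saturatedRootProd_nonneg (hw : Antitone w) (hs : ∀ ⦃i j⦄, i < j → 0 ≤ s i j) :
    0 ≤ saturatedRootProd w s :=
  prod_nonneg fun _ _ => prod_nonneg fun _ hj =>
    mul_saturate_nonneg (sub_nonneg.2 (hw (mem_Ioi.1 hj).le)) (hs (mem_Ioi.1 hj))

lemma saturatedRootProd_le_prod_mul {c : ι → ι → ℝ} (hw : Antitone w)
    (hc : ∀ ⦃i j⦄, i < j → 1 ≤ c i j) (hs : ∀ ⦃i j⦄, i < j → 0 ≤ s i j)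
    (ht : ∀ ⦃i j⦄, i < j → 0 ≤ t i j) (hst : ∀ ⦃i j⦄, i < j → s i j ≤ c i j * t i j) :
    saturatedRootProd w s ≤ (∏ i, ∏ j ∈ Ioi i, c i j) * saturatedRootProd w t := by
  have hwij : ∀ ⦃i j⦄, i < j → 0 ≤ w i - w j := fun i j hij => sub_nonneg.2 (hw hij.le)
  have hnn : ∀ ⦃i j⦄, i < j → 0 ≤ (w i - w j) * saturate (w i - w j) (s i j) := fun i j hij =>
    mul_saturate_nonneg (hwij hij) (hs hij)
  simp only [saturatedRootProd, ← prod_mul_distrib]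
  refine prod_le_prod (fun i _ => prod_nonneg fun j hj => hnn (mem_Ioi.1 hj)) fun i _ =>
    prod_le_prod (fun j hj => hnn (mem_Ioi.1 hj)) fun j hj => ?_
  have hij := mem_Ioi.1 hj
  rw [mul_left_comm]
  exact mul_le_mul_of_nonneg_left ((saturate_le_saturate (hwij hij) (hs hij) (hst hij)).trans
    (saturate_mul_le (hwij hij) (ht hij) (hc hij))) (hwij hij)

end SaturatedRootProd

section AltExpModel

variable {ι : Type*} [Fintype ι] [Preorder ι] [LocallyFiniteOrderTop ι]

/-- The elementary expression comparable with `altExp x y` for weakly decreasing `x` and `y`. -/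
noncomputable def altExpModel (x y : ι → ℝ) : ℝ :=
  Real.exp (∑ k, x k * y k) * saturatedRootProd y fun i j => x i - x j

lemma altExpModel_nonneg {x y : ι → ℝ} (hx : Antitone x) (hy : Antitone y) : 0 ≤ altExpModel x y :=
  mul_nonneg (Real.exp_nonneg _)
    (saturatedRootProd_nonneg hy fun _ _ hij => sub_nonneg.2 (hx hij.le))

lemma altExpModel_add_const (x y : ι → ℝ) (c : ℝ) :
    altExpModel x (fun j => y j + c) = Real.exp (c * ∑ i, x i) * altExpModel x y := by
  simp only [altExpModel, saturatedRootProd, add_sub_add_right_eq_sub, mul_add,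
    sum_add_distrib, Real.exp_add, ← sum_mul]
  ring_nf

end AltExpModel

lemma exp_sum_mul_eq_mul_prod {ι : Type*} [Fintype ι] (x z w : ι → ℝ) :
    Real.exp (∑ j, z j * w j) =
      Real.exp (∑ j, x j * w j) * ∏ j, Real.exp (-(w j * (x j - z j))) := by
  rw [← Real.exp_sum, ← Real.exp_add, ← sum_add_distrib]
  congr 2 with j
  ring

section InterlacingIntegral

variable {n : ℕ} {x : Fin (n + 1) → ℝ} {w z : Fin n → ℝ}

/-- The length scale on which `exp (z j * w j)` lives in the `j`-th edge of the interlacing box. -/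
noncomputable def satGap (x : Fin (n + 1) → ℝ) (w : Fin n → ℝ) (j : Fin n) : ℝ :=
  saturate (w j) (x j.castSucc - x j.succ)

/-- The typical size of `z i - z j` under the weight `exp (∑ j, z j * w j)` on the interlacing
box. -/
noncomputable def widenedGap (x : Fin (n + 1) → ℝ) (w : Fin n → ℝ) (i j : Fin n) : ℝ :=
  x i.castSucc - x j.castSucc + satGap x w j

/-- The elementary expression comparable with the integral of `altExpModel · w` over the
interlacing box of `x`. -/
noncomputable def interlacingModel (x : Fin (n + 1) → ℝ) (w : Fin n → ℝ) : ℝ :=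
  Real.exp (∑ j, x j.castSucc * w j) * saturatedRootProd w (widenedGap x w) * ∏ j, satGap x w j

lemma castSucc_sub_succ_nonneg (hx : Antitone x) (j : Fin n) : 0 ≤ x j.castSucc - x j.succ :=
  sub_nonneg.2 (hx Fin.castSucc_lt_succ.le)

lemma satGap_nonneg (hx : Antitone x) (hw : 0 ≤ w) (j : Fin n) : 0 ≤ satGap x w j :=
  saturate_nonneg (hw j) (castSucc_sub_succ_nonneg hx j)

lemma satGap_le (hx : Antitone x) (hw : 0 ≤ w) (j : Fin n) :
    satGap x w j ≤ x j.castSucc - x j.succ :=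
  saturate_le_self (hw j) (castSucc_sub_succ_nonneg hx j)

lemma widenedGap_nonneg (hx : Antitone x) (hw : 0 ≤ w) ⦃i j : Fin n⦄ (hij : i < j) :
    0 ≤ widenedGap x w i j :=
  add_nonneg (sub_nonneg.2 (hx (Fin.castSucc_le_castSucc_iff.2 hij.le))) (satGap_nonneg hx hw j)

lemma integrableOn_altExpModel (hw : Antitone w) :
    IntegrableOn (fun z => altExpModel z w) (interlacingBox x) := by
  refine ContinuousOn.integrableOn_compact isCompact_Icc <| ContinuousOn.mul (by fun_prop) <|
    continuousOn_finsetProd _ fun i _ => continuousOn_finsetProd _ fun j hj =>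
      continuousOn_const.mul <| ContinuousOn.div (by fun_prop) (by fun_prop) fun z hz => ?_
  have hwij := sub_nonneg.2 (hw (mem_Ioi.1 hj).le)
  have hzij := sub_nonneg.2 (antitone_of_mem_interlacingBox hz (mem_Ioi.1 hj).le)
  positivity

lemma sub_le_mul_widenedGap (hx : Antitone x) (hw : 0 ≤ w) (hz : z ∈ interlacingBox x)
    ⦃i j : Fin n⦄ (hij : i < j) :
    z i - z j ≤ (1 + w j * (x j.castSucc - z j)) * widenedGap x w i j := by
  have hu : 0 ≤ x j.castSucc - z j := sub_nonneg.2 (hz.2 j)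
  have hwu : 0 ≤ w j * (x j.castSucc - z j) := mul_nonneg (hw j) hu
  have hxij : 0 ≤ x i.castSucc - x j.castSucc :=
    sub_nonneg.2 (hx (Fin.castSucc_le_castSucc_iff.2 hij.le))
  have hdepth : x j.castSucc - z j ≤ (1 + w j * (x j.castSucc - z j)) * satGap x w j := by
    refine (saturate_mul_one_add (hw j) hu).symm.trans_le ?_
    rw [mul_comm]
    exact mul_le_mul_of_nonneg_left
      (saturate_le_saturate (hw j) hu (sub_le_sub_left (hz.1 j) _)) (by linarith)
  have hzi : z i ≤ x i.castSucc := hz.2 i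
  rw [widenedGap, mul_add]
  linarith [mul_nonneg hwu hxij]

lemma altExpModel_le_of_mem_interlacingBox (hx : Antitone x) (hw : Antitone w) (hw' : 0 ≤ w)
    (hz : z ∈ interlacingBox x) :
    altExpModel z w ≤
      Real.exp (∑ j, x j.castSucc * w j) * saturatedRootProd w (widenedGap x w) *
        ∏ j : Fin n, (((j : ℕ) + 2).factorial * Real.exp 1) *
          ((1 + w j * (x j.castSucc - z j)) ^ 2)⁻¹ := by
  have hv : ∀ j, 0 ≤ w j * (x j.castSucc - z j) := fun j =>
    mul_nonneg (hw' j) (sub_nonneg.2 (hz.2 j))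
  have hwide := saturatedRootProd_nonneg hw (widenedGap_nonneg hx hw')
  calc altExpModel z w
      ≤ Real.exp (∑ j, z j * w j) * ((∏ i : Fin n, ∏ j ∈ Ioi i,
          (1 + w j * (x j.castSucc - z j))) * saturatedRootProd w (widenedGap x w)) :=
        mul_le_mul_of_nonneg_left
          (saturatedRootProd_le_prod_mul hw (fun i j _ => le_add_of_nonneg_right (hv j))
            (fun i j hij => sub_nonneg.2 (antitone_of_mem_interlacingBox hz hij.le))
            (widenedGap_nonneg hx hw') (sub_le_mul_widenedGap hx hw' hz)) (Real.exp_nonneg _)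
    _ = Real.exp (∑ j, x j.castSucc * w j) * saturatedRootProd w (widenedGap x w) *
          ∏ j : Fin n, Real.exp (-(w j * (x j.castSucc - z j))) *
            (1 + w j * (x j.castSucc - z j)) ^ (j : ℕ) := by
        rw [prod_prod_Ioi_fin_snd, exp_sum_mul_eq_mul_prod (fun j => x j.castSucc),
          prod_mul_distrib]
        ring
    _ ≤ _ := mul_le_mul_of_nonneg_left (prod_le_prod
          (fun j _ => mul_nonneg (Real.exp_nonneg _) (pow_nonneg (by linarith [hv j]) _))
          fun j _ => exp_neg_mul_one_add_pow_le j (hv j))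
        (mul_nonneg (Real.exp_nonneg _) hwide)

lemma setIntegral_altExpModel_le (hx : Antitone x) (hw : Antitone w) (hw' : 0 ≤ w) :
    ∫ z in interlacingBox x, altExpModel z w ≤
      (∏ j : Fin n, ((j : ℕ) + 2).factorial * Real.exp 1) * interlacingModel x w := by
  have hint : IntegrableOn (fun z => ∏ j : Fin n, (((j : ℕ) + 2).factorial * Real.exp 1) *
      ((1 + w j * (x j.castSucc - z j)) ^ 2)⁻¹) (interlacingBox x) := by
    refine ContinuousOn.integrableOn_compact isCompact_Icc <| continuousOn_finsetProd _
      fun j _ => continuousOn_const.mul <| ContinuousOn.inv₀ (by fun_prop) fun z hz => ?_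
    have := mul_nonneg (hw' j) (sub_nonneg.2 (hz.2 j))
    positivity
  calc ∫ z in interlacingBox x, altExpModel z w
      ≤ ∫ z in interlacingBox x,
          Real.exp (∑ j, x j.castSucc * w j) * saturatedRootProd w (widenedGap x w) *
            ∏ j : Fin n, (((j : ℕ) + 2).factorial * Real.exp 1) *
              ((1 + w j * (x j.castSucc - z j)) ^ 2)⁻¹ :=
        setIntegral_mono_on (integrableOn_altExpModel hw) (hint.const_mul _) measurableSet_Icc
          fun z hz => altExpModel_le_of_mem_interlacingBox hx hw hw' hz
    _ = Real.exp (∑ j, x j.castSucc * w j) * saturatedRootProd w (widenedGap x w) *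
          ∏ j : Fin n, (((j : ℕ) + 2).factorial * Real.exp 1) * satGap x w j := by
        rw [integral_const_mul, interlacingBox, setIntegral_Icc_prod _ _ fun (j : Fin n) t =>
          (((j : ℕ) + 2).factorial * Real.exp 1) * ((1 + w j * (x j.castSucc - t)) ^ 2)⁻¹]
        simp only [integral_const_mul, satGap,
          setIntegral_Icc_inv_one_add_mul_sq (hw' _) (hx Fin.castSucc_lt_succ.le)]
    _ = _ := by
        rw [interlacingModel, prod_mul_distrib]
        ring

/-- The part of the interlacing box where `exp (∑ j, z j * w j)` is within a constant factor of
its maximum and the gaps `z i - z j` have their typical size `widenedGap x w i j`. -/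
def bulkBox (x : Fin (n + 1) → ℝ) (w : Fin n → ℝ) : Set (Fin n → ℝ) :=
  Set.Icc (fun j => x j.castSucc - satGap x w j / 2) fun j => x j.castSucc - satGap x w j / 4

lemma bulkBox_subset_interlacingBox (hx : Antitone x) (hw : 0 ≤ w) :
    bulkBox x w ⊆ interlacingBox x :=
  Set.Icc_subset_Icc (fun j => by linarith [satGap_nonneg hx hw j, satGap_le hx hw j])
    fun j => by linarith [satGap_nonneg hx hw j]

lemma volume_real_bulkBox (hx : Antitone x) (hw : 0 ≤ w) :
    volume.real (bulkBox x w) = ∏ j, satGap x w j / 4 := by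
  rw [Measure.real, bulkBox, Real.volume_Icc_pi_toReal]
  · exact prod_congr rfl fun j _ => by ring
  · exact fun j => by linarith [satGap_nonneg hx hw j]

lemma widenedGap_le_of_mem_bulkBox (hx : Antitone x) (hw : 0 ≤ w) (hz : z ∈ bulkBox x w)
    ⦃i j : Fin n⦄ (hij : i < j) : widenedGap x w i j ≤ 4 * (z i - z j) := by
  have hzi : x i.castSucc - satGap x w i / 2 ≤ z i := hz.1 i
  have hzj : z j ≤ x j.castSucc - satGap x w j / 4 := hz.2 j
  have hxij : x j.castSucc ≤ x i.succ := hx (Fin.succ_le_castSucc_iff.2 hij)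
  rw [widenedGap]
  linarith [satGap_nonneg hx hw i, satGap_le hx hw i]

lemma le_altExpModel_of_mem_bulkBox (hx : Antitone x) (hw : Antitone w) (hw' : 0 ≤ w)
    (hz : z ∈ bulkBox x w) :
    Real.exp (∑ j, x j.castSucc * w j) * saturatedRootProd w (widenedGap x w) ≤
      ((∏ _j : Fin n, Real.exp 1) * ∏ i : Fin n, ∏ _j ∈ Ioi i, 4) * altExpModel z w := by
  have hzbox := bulkBox_subset_interlacingBox hx hw' hz
  have hexp : Real.exp (∑ j, x j.castSucc * w j) ≤
      (∏ _j : Fin n, Real.exp 1) * Real.exp (∑ j, z j * w j) := by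
    rw [exp_sum_mul_eq_mul_prod z (fun j => x j.castSucc), mul_comm]
    refine mul_le_mul_of_nonneg_right (prod_le_prod (fun _ _ => Real.exp_nonneg _) fun j _ =>
      Real.exp_le_exp.2 ?_) (Real.exp_nonneg _)
    have hzj : x j.castSucc - satGap x w j / 2 ≤ z j := hz.1 j
    have hwj : w j * satGap x w j ≤ 1 := mul_saturate_le_one (hw' j) (castSucc_sub_succ_nonneg hx j)
    have hdepth : w j * (x j.castSucc - z j) ≤ w j * satGap x w j :=
      mul_le_mul_of_nonneg_left (by linarith [satGap_nonneg hx hw' j]) (hw' j)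
    linarith
  have hwide : saturatedRootProd w (widenedGap x w) ≤
      (∏ i : Fin n, ∏ _j ∈ Ioi i, 4) * saturatedRootProd w fun i j => z i - z j :=
    saturatedRootProd_le_prod_mul hw (fun _ _ _ => by norm_num) (widenedGap_nonneg hx hw')
      (fun _ _ hij => sub_nonneg.2 (antitone_of_mem_interlacingBox hzbox hij.le))
      (widenedGap_le_of_mem_bulkBox hx hw' hz)
  rw [altExpModel, mul_mul_mul_comm]
  exact mul_le_mul hexp hwide (saturatedRootProd_nonneg hw (widenedGap_nonneg hx hw'))
    (by positivity)

lemma interlacingModel_le (hx : Antitone x) (hw : Antitone w) (hw' : 0 ≤ w) :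
    interlacingModel x w ≤
      (((∏ _j : Fin n, Real.exp 1) * ∏ i : Fin n, ∏ _j ∈ Ioi i, 4) * ∏ _j : Fin n, 4) *
        ∫ z in interlacingBox x, altExpModel z w := by
  have hsub := bulkBox_subset_interlacingBox hx hw'
  have hint : IntegrableOn (fun z => altExpModel z w) (interlacingBox x) :=
    integrableOn_altExpModel hw
  have hbulk : Real.exp (∑ j, x j.castSucc * w j) * saturatedRootProd w (widenedGap x w) *
      volume.real (bulkBox x w) ≤
        ((∏ _j : Fin n, Real.exp 1) * ∏ i : Fin n, ∏ _j ∈ Ioi i, 4) *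
          ∫ z in bulkBox x w, altExpModel z w := by
    rw [← integral_const_mul]
    exact setIntegral_ge_of_const_le_real measurableSet_Icc isCompact_Icc.measure_ne_top
      (fun z hz => le_altExpModel_of_mem_bulkBox hx hw hw' hz) ((hint.mono_set hsub).const_mul _)
  have hmono : ∫ z in bulkBox x w, altExpModel z w ≤ ∫ z in interlacingBox x, altExpModel z w :=
    setIntegral_mono_set hint (ae_restrict_of_forall_mem measurableSet_Icc fun z hz =>
      altExpModel_nonneg (antitone_of_mem_interlacingBox hz) hw) hsub.eventuallyLE
  have hvol : (∏ j, satGap x w j) = volume.real (bulkBox x w) * ∏ _j : Fin n, 4 := by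
    rw [volume_real_bulkBox hx hw', ← prod_mul_distrib]
    exact prod_congr rfl fun j _ => by ring
  rw [interlacingModel, hvol, ← mul_assoc, mul_right_comm _ (∏ _j : Fin n, (4 : ℝ))]
  exact mul_le_mul_of_nonneg_right (hbulk.trans (mul_le_mul_of_nonneg_left hmono (by positivity)))
    (by positivity)

lemma exists_comparableWith_setIntegral_altExpModel (n : ℕ) :
    ∃ C : ℝ, 0 < C ∧ ∀ (x : Fin (n + 1) → ℝ) (w : Fin n → ℝ), Antitone x → Antitone w → 0 ≤ w →
      ComparableWith C (∫ z in interlacingBox x, altExpModel z w) (interlacingModel x w) := by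
  refine ⟨_, lt_max_of_lt_left ?_, fun x w hx hw hw' => .max_of_le ?_ ?_
    (setIntegral_altExpModel_le hx hw hw') (interlacingModel_le hx hw hw')⟩
  · positivity
  · positivity
  · exact mul_nonneg (mul_nonneg (Real.exp_nonneg _) (saturatedRootProd_nonneg hw
      (widenedGap_nonneg hx hw'))) (prod_nonneg fun j _ => satGap_nonneg hx hw' j)

end InterlacingIntegral

section Induction

variable {n : ℕ} {x : Fin (n + 1) → ℝ} {w : Fin n → ℝ}

lemma comparableWith_satGap_mul_prod (hx : Antitone x) (hw : Antitone w) (hw' : 0 ≤ w)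
    (i : Fin n) :
    ComparableWith (∏ _j ∈ Ioi i, 4)
      (satGap x w i * ∏ j ∈ Ioi i, (w i - w j) * saturate (w i - w j) (widenedGap x w i j))
      ((∏ j ∈ Ioi i,
          (w i - w j) * saturate (w i - w j) (x i.castSucc - x j.castSucc)) *
        saturate (w i) (x i.castSucc - x (Fin.last n))) := by
  have hwij : ∀ j, i < j → 0 ≤ w i - w j := fun j hij => sub_nonneg.2 (hw hij.le)
  have hxij : ∀ j, i < j → 0 ≤ x i.castSucc - x j.castSucc := fun j hij =>
    sub_nonneg.2 (hx (Fin.castSucc_le_castSucc_iff.2 hij.le))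
  refine ComparableWith.telescope (f := fun k => saturate (w i) (x i.castSucc - x k)) i
    (by norm_num) (fun j hij => mul_saturate_nonneg (hwij j hij) (widenedGap_nonneg hx hw' hij))
    (fun j hij => mul_saturate_nonneg (hwij j hij) (hxij j hij)) fun j hij => ?_
  have h := (comparableWith_saturate_exchange (hwij j hij) (hw' j) (hxij j hij)
    (castSucc_sub_succ_nonneg hx j)).mul_left (hwij j hij)
  rw [sub_add_cancel, sub_add_sub_cancel] at h
  rwa [mul_left_comm, mul_assoc]

lemma comparableWith_prod_mul_interlacingModel (hx : Antitone x) (hw : Antitone w)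
    (hw' : 0 ≤ w) :
    ComparableWith (∏ i : Fin n, ∏ _j ∈ Ioi i, 4) ((∏ j, w j) * interlacingModel x w)
      (altExpModel x (Fin.snoc w 0 : Fin (n + 1) → ℝ)) := by
  have hwij : ∀ ⦃i j : Fin n⦄, i < j → 0 ≤ w i - w j := fun i j hij => sub_nonneg.2 (hw hij.le)
  have hu : ∀ i, 0 ≤ satGap x w i *
      ∏ j ∈ Ioi i, (w i - w j) * saturate (w i - w j) (widenedGap x w i j) := fun i =>
    mul_nonneg (satGap_nonneg hx hw' i) <| prod_nonneg fun j hj =>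
      mul_saturate_nonneg (hwij (mem_Ioi.1 hj)) (widenedGap_nonneg hx hw' (mem_Ioi.1 hj))
  have hv : ∀ i, 0 ≤
      (∏ j ∈ Ioi i, (w i - w j) * saturate (w i - w j) (x i.castSucc - x j.castSucc)) *
        saturate (w i) (x i.castSucc - x (Fin.last n)) := fun i =>
    mul_nonneg
      (prod_nonneg fun j hj => mul_saturate_nonneg (hwij (mem_Ioi.1 hj))
        (sub_nonneg.2 (hx (Fin.castSucc_le_castSucc_iff.2 (mem_Ioi.1 hj).le))))
      (saturate_nonneg (hw' i) (sub_nonneg.2 (hx (Fin.le_last _))))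
  have hprod := ComparableWith.prod (s := univ) (fun i _ => hu i) (fun i _ => hv i) fun i _ =>
    comparableWith_satGap_mul_prod hx hw hw' i
  have hc : 0 ≤ Real.exp (∑ j, x j.castSucc * w j) * ∏ j, w j :=
    mul_nonneg (Real.exp_nonneg _) (prod_nonneg fun j _ => hw' j)
  have hleft : (∏ j, w j) * interlacingModel x w =
      (Real.exp (∑ j, x j.castSucc * w j) * ∏ j, w j) * ∏ i, satGap x w i *
        ∏ j ∈ Ioi i, (w i - w j) * saturate (w i - w j) (widenedGap x w i j) := by
    rw [interlacingModel, saturatedRootProd, prod_mul_distrib]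
    ring
  have hright : altExpModel x (Fin.snoc w 0 : Fin (n + 1) → ℝ) =
      (Real.exp (∑ j, x j.castSucc * w j) * ∏ j, w j) *
        ∏ i, (∏ j ∈ Ioi i, (w i - w j) * saturate (w i - w j) (x i.castSucc - x j.castSucc)) *
          saturate (w i) (x i.castSucc - x (Fin.last n)) := by
    rw [altExpModel, saturatedRootProd, prod_prod_Ioi_fin_castSucc, Fin.sum_univ_castSucc]
    simp only [Fin.snoc_castSucc, Fin.snoc_last, mul_zero, add_zero, sub_zero, prod_mul_distrib]
    ring
  rw [hleft, hright]
  exact hprod.mul_left hc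

lemma ComparableWith.altExp_of_snoc_zero {C : ℝ}
    (h : ∀ w : Fin n → ℝ, Antitone w → 0 ≤ w →
      ComparableWith C (altExp x (Fin.snoc w 0 : Fin (n + 1) → ℝ))
        (altExpModel x (Fin.snoc w 0 : Fin (n + 1) → ℝ)))
    {y : Fin (n + 1) → ℝ} (hy : Antitone y) :
    ComparableWith C (altExp x y) (altExpModel x y) := by
  set w : Fin n → ℝ := fun j => y j.castSucc - y (Fin.last n) with hw
  have hyw : y = fun j => (Fin.snoc w 0 : Fin (n + 1) → ℝ) j + y (Fin.last n) := by
    ext j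
    induction j using Fin.lastCases <;> simp [hw]
  rw [hyw, altExp_add_const, altExpModel_add_const]
  refine (h w (fun i j hij => ?_) fun j => ?_).mul_left (Real.exp_nonneg _)
  · exact sub_le_sub_right (hy (Fin.castSucc_le_castSucc_iff.2 hij)) _
  · exact sub_nonneg.2 (hy (Fin.le_last _))

theorem exists_comparableWith_altExp (n : ℕ) :
    ∃ C : ℝ, 0 < C ∧ ∀ x y : Fin n → ℝ, Antitone x → Antitone y →
      ComparableWith C (altExp x y) (altExpModel x y) := by
  induction n with
  | zero =>
    exact ⟨1, one_pos, fun x y _ _ => by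
      simpa [altExp, altExpModel, saturatedRootProd] using ComparableWith.refl (1 : ℝ)⟩
  | succ n ih =>
    obtain ⟨C, hC, hind⟩ := ih
    obtain ⟨D, hD, hmodel⟩ := exists_comparableWith_setIntegral_altExpModel n
    refine ⟨C * D * ∏ i : Fin n, ∏ _j ∈ Ioi i, 4, by positivity, fun x y hx hy =>
      .altExp_of_snoc_zero (fun w hw hw' => ?_) hy⟩
    have hintegral : ComparableWith C (∫ z in interlacingBox x, altExp z w)
        (∫ z in interlacingBox x, altExpModel z w) :=
      .setIntegral measurableSet_Icc (continuous_altExp_left w).integrableOn_Icc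
        (integrableOn_altExpModel hw) fun z hz =>
          hind z w (antitone_of_mem_interlacingBox hz) hw
    rw [altExp_snoc_zero hx]
    exact ((hintegral.trans hC.le hD.le (hmodel x w hx hw hw')).mul_left
      (prod_nonneg fun j _ => hw' j)).trans (by positivity) (by positivity)
        (comparableWith_prod_mul_interlacingModel hx hw hw')

end Induction

section HeatKernel

variable {ι : Type*} [Fintype ι] {t : ℝ} {x y : ι → ℝ}

lemma exp_neg_sum_sub_sq_div (ht : t ≠ 0) :
    Real.exp (-(∑ k, (x k - y k) ^ 2) / (4 * t)) =
      Real.exp (-((∑ k, x k ^ 2) + ∑ k, y k ^ 2) / (4 * t)) *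
        Real.exp (∑ k, x k / (2 * t) * y k) := by
  rw [← Real.exp_add]
  congr 1
  simp only [sub_sq, sum_add_distrib, sum_sub_distrib, div_mul_eq_mul_div, ← sum_div, mul_assoc,
    ← mul_sum]
  field_simp
  ring

lemma altExp_div_eq_sum [DecidableEq ι] (x y : ι → ℝ) (t : ℝ) :
    altExp (fun k => x k / t) y = ∑ σ : Equiv.Perm ι, ((Equiv.Perm.sign σ : ℤ) : ℝ) *
      Real.exp ((1 / t) * ∑ k, x (σ k) * y k) := by
  simp only [altExp_eq_sum, mul_sum, ← mul_assoc, one_div_mul_eq_div]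

lemma comparableWith_saturate_div_mul_add {a b : ℝ} (ht : 0 < t) (ha : 0 ≤ a) (hb : 0 ≤ b) :
    ComparableWith 2 (b * saturate b (a / (2 * t)) * (t + a * b)) (a * b) := by
  have hab : 0 ≤ a * b := mul_nonneg ha hb
  have heq : b * saturate b (a / (2 * t)) * (t + a * b) =
      a * b * (t + a * b) / (2 * t + a * b) := by
    rw [saturate]
    field_simp
  rw [heq]
  constructor
  · rw [div_le_iff₀ (by positivity)]
    nlinarith
  · rw [← mul_div_assoc, le_div_iff₀ (by positivity)]
    nlinarith

lemma comparableWith_altExpModel_mul_prod [Preorder ι] [LocallyFiniteOrderTop ι] (ht : 0 < t)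
    (hx : Antitone x) (hy : Antitone y) :
    ComparableWith (∏ i : ι, ∏ _j ∈ Ioi i, 2)
      (altExpModel (fun k => x k / (2 * t)) y *
        ∏ i, ∏ j ∈ Ioi i, (t + (x i - x j) * (y i - y j)))
      (Real.exp (∑ k, x k / (2 * t) * y k) * ∏ i, ∏ j ∈ Ioi i, (x i - x j) * (y i - y j)) := by
  rw [altExpModel, saturatedRootProd, mul_assoc]
  simp only [← prod_mul_distrib, ← sub_div]
  have hx' : ∀ ⦃i j⦄, i < j → 0 ≤ x i - x j := fun i j hij => sub_nonneg.2 (hx hij.le)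
  have hy' : ∀ ⦃i j⦄, i < j → 0 ≤ y i - y j := fun i j hij => sub_nonneg.2 (hy hij.le)
  refine (ComparableWith.prod_prod_Ioi (fun i j hij => ?_) (fun i j hij => ?_) fun i j hij =>
    comparableWith_saturate_div_mul_add ht (hx' hij) (hy' hij)).mul_left (Real.exp_nonneg _)
  · have := hx' hij
    have := hy' hij
    have := saturate_nonneg (hy' hij) (div_nonneg (hx' hij) (by positivity : 0 ≤ 2 * t))
    positivity
  · exact mul_nonneg (hx' hij) (hy' hij)

end HeatKernel
/-- Sharp estimate for the `W`-invariant heat kernel of the flat complex symmetric space of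
type `A_{n-1}`: for `t > 0` and weakly decreasing `x, y`,
`e^{−(|x|²+|y|²)/(4t)} · (∑_σ sgn σ · e^{(1/(2t))∑ x_{σ(k)} y_k}) · ∏_{i<j}(t+(x_i−x_j)(y_i−y_j))
 ≍ e^{−|x−y|²/(4t)} · ∏_{i<j}(x_i−x_j)(y_i−y_j)`, with constants depending only on `n`. -/
theorem flat_heat_kernel_estimate_An (n : ℕ) (hn : 1 ≤ n) :
    ∃ C₁ C₂ : ℝ, 0 < C₁ ∧ 0 < C₂ ∧
      ∀ t : ℝ, 0 < t → ∀ x y : Fin n → ℝ, Antitone x → Antitone y →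
        C₁ * (Real.exp (-(∑ k, (x k - y k) ^ 2) / (4 * t)) *
              ∏ i : Fin n, ∏ j ∈ Finset.Ioi i, (x i - x j) * (y i - y j)) ≤
            Real.exp (-((∑ k, x k ^ 2) + ∑ k, y k ^ 2) / (4 * t)) *
              (∑ σ : Equiv.Perm (Fin n), ((Equiv.Perm.sign σ : ℤ) : ℝ) *
                Real.exp ((1 / (2 * t)) * ∑ k, x (σ k) * y k)) *
              (∏ i : Fin n, ∏ j ∈ Finset.Ioi i, (t + (x i - x j) * (y i - y j))) ∧
        Real.exp (-((∑ k, x k ^ 2) + ∑ k, y k ^ 2) / (4 * t)) *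
              (∑ σ : Equiv.Perm (Fin n), ((Equiv.Perm.sign σ : ℤ) : ℝ) *
                Real.exp ((1 / (2 * t)) * ∑ k, x (σ k) * y k)) *
              (∏ i : Fin n, ∏ j ∈ Finset.Ioi i, (t + (x i - x j) * (y i - y j))) ≤
          C₂ * (Real.exp (-(∑ k, (x k - y k) ^ 2) / (4 * t)) *
              ∏ i : Fin n, ∏ j ∈ Finset.Ioi i, (x i - x j) * (y i - y j)) := by
  obtain ⟨C, hC, hcomp⟩ := exists_comparableWith_altExp n
  have hD : (0 : ℝ) < C * ∏ i : Fin n, ∏ _j ∈ Ioi i, 2 := by positivity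
  refine ⟨_, _, inv_pos.2 hD, hD, fun t ht x y hx hy => ?_⟩
  have hxt : Antitone fun k => x k / (2 * t) := fun i j hij =>
    div_le_div_of_nonneg_right (hx hij) (by positivity)
  have hprod : 0 ≤ ∏ i : Fin n, ∏ j ∈ Ioi i, (t + (x i - x j) * (y i - y j)) :=
    prod_nonneg fun i _ => prod_nonneg fun j hj => add_nonneg ht.le
      (mul_nonneg (sub_nonneg.2 (hx (mem_Ioi.1 hj).le)) (sub_nonneg.2 (hy (mem_Ioi.1 hj).le)))
  have hkernel := ((((hcomp _ y hxt hy).mul_right hprod).trans hC.le (by positivity)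
    (comparableWith_altExpModel_mul_prod ht hx hy)).mul_left
      (Real.exp_nonneg (-((∑ k, x k ^ 2) + ∑ k, y k ^ 2) / (4 * t))))
  rw [← mul_assoc, ← mul_assoc, ← exp_neg_sum_sub_sq_div ht.ne', altExp_div_eq_sum] at hkernel
  exact ⟨(inv_mul_le_iff₀ hD).2 hkernel.ge_mul, hkernel.le_mul⟩
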